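/- The finitary local consequence relation of Łukasiewicz modal logic is decidable: there is an algorithm deciding, for any finite set Γ ∪ {φ} of modal formulas, whether Γ ⊢ φ locally over the class of all safe Łukasiewicz Kripke models. -/

import Mathlib

/-!
Failure of local consequence is witnessed by a finite object of bounded size, so it can be
decided by a bounded search.

* *Attained values.* Passing to an ultrapower along a nonprincipal ultrafilter on `ℕ`, with values
  defined as limits along the ultrafilter, a countermodel becomes one in which the infimum and
  supremum defining modal values are attained whenever they are not vacuous (`exists_attained`).
* *Finite models.* Subformulas have smaller codes, so for formulas with codes at most `D` it
  suffices to keep the worlds reached from the root by at most `D` choices of witnesses. This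
  gives a countermodel with a fixed number of worlds (`exists_finite_model`).
* *Rational values.* That a family of reals is the value table of a finite model depends only on
  the signs of finitely many affine forms in the entries, with coefficients in `{-3, …, 3}`. By
  eliminating one coordinate at a time, every real point has a rational companion with the same
  sign pattern and an explicit common denominator (`exists_grid_point`, `gridDen`). Hence the
  values may be taken to be multiples of `1 / N` for a computable `N` (`exists_grid_values`).
* *Search.* Value tables and accessibility relations are coded by the digits of bounded numbers,
  and the correctness of a table is a bounded condition (`LocallyCorrect`, `refutes_iff`). All
  bounds, including `gridDen`, are primitive recursive, and so is the search
  (`primrecPred_searchSucceeds`).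
-/

/-- Modal formulas over a set `V` of propositional variables. -/
inductive MFormula (V : Type) : Type
  | var : V → MFormula V
  | fZero : MFormula V
  | fOne : MFormula V
  | fAnd : MFormula V → MFormula V → MFormula V
  | fOr : MFormula V → MFormula V → MFormula V
  | fMul : MFormula V → MFormula V → MFormula V
  | fImp : MFormula V → MFormula V → MFormula V
  | fBox : MFormula V → MFormula V
  | fDia : MFormula V → MFormula V
  deriving DecidableEq

namespace MFormula

variable {V : Type}

def fNeg (φ : MFormula V) : MFormula V := .fImp φ .fZero

def fIff (φ ψ : MFormula V) : MFormula V := .fMul (.fImp φ ψ) (.fImp ψ φ)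

end MFormula

/-- A (safe) Kripke model over the standard MV algebra `[0,1]_Ł`: all values lie in
`[0,1] ⊆ ℝ`, the propositional connectives are computed world-wise by the Łukasiewicz
operations, and `□`/`◇` are the infimum/supremum of the values at accessible worlds
(`1`/`0` when there are none); over `[0,1]` these always exist, so every such model is
safe. -/
structure LukModel (V : Type) where
  W : Type
  nonempty : Nonempty W
  R : W → W → Prop
  e : W → MFormula V → ℝ
  mem01 : ∀ v φ, e v φ ∈ Set.Icc (0 : ℝ) 1
  e_zero : ∀ v, e v .fZero = 0
  e_one : ∀ v, e v .fOne = 1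
  e_and : ∀ v φ ψ, e v (.fAnd φ ψ) = min (e v φ) (e v ψ)
  e_or : ∀ v φ ψ, e v (.fOr φ ψ) = max (e v φ) (e v ψ)
  e_mul : ∀ v φ ψ, e v (.fMul φ ψ) = max 0 (e v φ + e v ψ - 1)
  e_imp : ∀ v φ ψ, e v (.fImp φ ψ) = min 1 (1 - e v φ + e v ψ)
  e_box : ∀ v φ, IsGLB (insert (1 : ℝ) {a | ∃ w, R v w ∧ e w φ = a}) (e v (.fBox φ))
  e_dia : ∀ v φ, IsLUB (insert (0 : ℝ) {a | ∃ w, R v w ∧ e w φ = a}) (e v (.fDia φ))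

namespace LukModel

variable {V : Type}

/-- The accessibility relation is transitive. -/
def IsTrans (M : LukModel V) : Prop := ∀ a b c : M.W, M.R a b → M.R b c → M.R a c

/-- A model is witnessed if the value of every `□`- and `◇`-formula at every world is
attained at some accessible world. -/
def Witnessed (M : LukModel V) : Prop :=
  ∀ (v : M.W) (φ : MFormula V),
    (∃ w, M.R v w ∧ M.e v (.fBox φ) = M.e w φ) ∧
    (∃ w, M.R v w ∧ M.e v (.fDia φ) = M.e w φ)

end LukModel

/-- A numerical code for modal formulas over variables `ℕ`. -/
def code : MFormula ℕ → ℕ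
  | .var n => Nat.pair 0 n
  | .fZero => Nat.pair 1 0
  | .fOne => Nat.pair 2 0
  | .fAnd φ ψ => Nat.pair 3 (Nat.pair (code φ) (code ψ))
  | .fOr φ ψ => Nat.pair 4 (Nat.pair (code φ) (code ψ))
  | .fMul φ ψ => Nat.pair 5 (Nat.pair (code φ) (code ψ))
  | .fImp φ ψ => Nat.pair 6 (Nat.pair (code φ) (code ψ))
  | .fBox φ => Nat.pair 7 (code φ)
  | .fDia φ => Nat.pair 8 (code φ)

/-- Code of a pair (finite premise set, conclusion). -/
def codePair (Γ : List (MFormula ℕ)) (φ : MFormula ℕ) : ℕ :=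
  Nat.pair (Encodable.encode (Γ.map code)) (code φ)

/-! ### Rational points with a given sign pattern -/

/-- Given finitely many thresholds `τ` with a second family `τ'` ordered in the same way, any
position `t` relative to `τ` is realised relative to `τ'` by a midpoint of two thresholds, up to
an integer shift (the shift is needed only beyond the extreme thresholds). -/
theorem exists_same_cut {I : Type} (S : Finset I) (hS : S.Nonempty) (τ τ' : I → ℝ)
    (h : ∀ i ∈ S, ∀ j ∈ S, τ i ≤ τ j ↔ τ' i ≤ τ' j) (t : ℝ) :
    ∃ i ∈ S, ∃ j ∈ S, ∃ k : ℤ, ∀ s : ℝ, s = (τ' i + τ' j) / 2 + k →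
      ∀ l ∈ S, (τ l ≤ t ↔ τ' l ≤ s) ∧ (t ≤ τ l ↔ s ≤ τ' l) := by
  classical
  by_cases he : ∃ i ∈ S, τ i = t
  · obtain ⟨i, hi, rfl⟩ := he
    refine ⟨i, hi, i, hi, 0, ?_⟩
    rintro s rfl l hl
    have e : (τ' i + τ' i) / 2 + ((0 : ℤ) : ℝ) = τ' i := by push_cast; ring
    rw [e]
    exact ⟨h l hl i hi, h i hi l hl⟩
  push Not at he
  have key : ∀ s : ℝ, (∀ l ∈ S, τ l < t → τ' l < s) → (∀ l ∈ S, t < τ l → s < τ' l) →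
      ∀ l ∈ S, (τ l ≤ t ↔ τ' l ≤ s) ∧ (t ≤ τ l ↔ s ≤ τ' l) := by
    intro s h1 h2 l hl
    rcases lt_or_gt_of_ne (he l hl) with hlt | hlt
    · have := h1 l hl hlt
      constructor <;> constructor <;> intro <;> linarith
    · have := h2 l hl hlt
      constructor <;> constructor <;> intro <;> linarith
  by_cases hL : (S.filter fun i => τ i < t).Nonempty
  · obtain ⟨i, hi, hmax⟩ := Finset.exists_max_image _ τ hL
    simp only [Finset.mem_filter] at hi hmax
    by_cases hU : (S.filter fun i => t < τ i).Nonempty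
    · obtain ⟨j, hj, hmin⟩ := Finset.exists_min_image _ τ hU
      simp only [Finset.mem_filter] at hj hmin
      have hij : τ' i < τ' j := by
        by_contra hc
        have := (h j hj.1 i hi.1).2 (not_lt.1 hc)
        linarith [hi.2, hj.2]
      refine ⟨i, hi.1, j, hj.1, 0, ?_⟩
      rintro s rfl
      apply key
      · intro l hl hlt
        have := (h l hl i hi.1).1 (hmax l ⟨hl, hlt⟩)
        push_cast; linarith
      · intro l hl hlt
        have := (h j hj.1 l hl).1 (hmin l ⟨hl, hlt⟩)
        push_cast; linarith
    · refine ⟨i, hi.1, i, hi.1, 1, ?_⟩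
      rintro s rfl
      apply key
      · intro l hl hlt
        have := (h l hl i hi.1).1 (hmax l ⟨hl, hlt⟩)
        push_cast; linarith
      · intro l hl hlt
        exact absurd ⟨l, by simp [hl, hlt]⟩ hU
  · by_cases hU : (S.filter fun i => t < τ i).Nonempty
    · obtain ⟨j, hj, hmin⟩ := Finset.exists_min_image _ τ hU
      simp only [Finset.mem_filter] at hj hmin
      refine ⟨j, hj.1, j, hj.1, -1, ?_⟩
      rintro s rfl
      apply key
      · intro l hl hlt
        exact absurd ⟨l, by simp [hl, hlt]⟩ hL
      · intro l hl hlt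
        have := (h j hj.1 l hl).1 (hmin l ⟨hl, hlt⟩)
        push_cast; linarith
    · obtain ⟨i, hi⟩ := hS
      rcases lt_or_gt_of_ne (he i hi) with hlt | hlt
      · exact absurd ⟨i, by simp [hi, hlt]⟩ hL
      · exact absurd ⟨i, by simp [hi, hlt]⟩ hU

/-- A common denominator that suffices to realise, by rational points of `ℝ^m`, every sign
pattern of affine forms with integer coefficients bounded by `C`. -/
def gridDen : ℕ → ℕ → ℕ
  | 0, _ => 1
  | m + 1, C => 2 * C.factorial * gridDen m (2 * C * C)

theorem gridDen_pos (m C : ℕ) : 0 < gridDen m C := by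
  induction m generalizing C with
  | zero => simp [gridDen]
  | succ m ih => exact Nat.mul_pos (Nat.mul_pos two_pos C.factorial_pos) (ih _)

/-- Every real point has a rational companion with denominator `gridDen m C` on which all
affine forms with integer coefficients in `[-C, C]` have the same sign. The last coordinate to
be placed is located relative to the roots of the forms in which it occurs; comparing two such
roots is a condition of the same kind on the other coordinates, with coefficients bounded by
`2 * C * C`. -/
theorem exists_grid_point (m C : ℕ) (hC : 1 ≤ C) (x : Fin m → ℝ) :
    ∃ y : Fin m → ℝ, (∀ i, ∃ z : ℤ, y i * (gridDen m C : ℝ) = z) ∧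
      ∀ (a : Fin m → ℤ) (b : ℤ), (∀ i, |a i| ≤ C) → |b| ≤ C →
        (0 ≤ ∑ i, (a i : ℝ) * x i + b ↔ 0 ≤ ∑ i, (a i : ℝ) * y i + b) := by
  induction m generalizing C with
  | zero => exact ⟨x, fun i => i.elim0, fun a b _ _ => by simp⟩
  | succ m ih =>
    obtain ⟨y, hy, hsign⟩ := ih (2 * C * C) (by nlinarith) (Fin.tail x)
    let S : Finset (ℤ × ℤ × (Fin m → ℤ)) :=
      Finset.Icc 1 (C : ℤ) ×ˢ Finset.Icc (-C : ℤ) C ×ˢ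
        Fintype.piFinset fun _ => Finset.Icc (-C : ℤ) C
    have hmem : ∀ p : ℤ × ℤ × (Fin m → ℤ),
        p ∈ S ↔ (1 ≤ p.1 ∧ p.1 ≤ C) ∧ |p.2.1| ≤ C ∧ ∀ i, |p.2.2 i| ≤ C := by
      intro p
      simp only [S, Finset.mem_product, Finset.mem_Icc, Fintype.mem_piFinset, abs_le]
    let F : (Fin m → ℝ) → ℤ × ℤ × (Fin m → ℤ) → ℝ :=
      fun u p => ∑ i, (p.2.2 i : ℝ) * u i + p.2.1
    -- For `p.1 > 0`, `τ u p` is the root `t` of the form `p.1 * t + F u p`.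
    let τ : (Fin m → ℝ) → ℤ × ℤ × (Fin m → ℤ) → ℝ := fun u p => -(F u p) / p.1
    have hτ : ∀ p ∈ S, ∀ q ∈ S,
        (τ (Fin.tail x) p ≤ τ (Fin.tail x) q ↔ τ y p ≤ τ y q) := by
      intro p hp q hq
      rw [hmem] at hp hq
      have hp1 : (0 : ℝ) < p.1 := by exact_mod_cast hp.1.1
      have hq1 : (0 : ℝ) < q.1 := by exact_mod_cast hq.1.1
      have bd : ∀ c d : ℤ, |c| ≤ C → |d| ≤ C → |q.1 * c - p.1 * d| ≤ ((2 * C * C : ℕ) : ℤ) := by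
        intro c d hc hd
        calc |q.1 * c - p.1 * d| ≤ |q.1 * c| + |p.1 * d| := abs_sub _ _
          _ = q.1 * |c| + p.1 * |d| := by
            rw [abs_mul, abs_mul, abs_of_nonneg (by linarith : 0 ≤ q.1),
              abs_of_nonneg (by linarith : 0 ≤ p.1)]
          _ ≤ C * C + C * C := by
            gcongr
            · exact hq.1.2
            · exact hp.1.2
          _ = _ := by push_cast; ring
      have hs := hsign (fun i => q.1 * p.2.2 i - p.1 * q.2.2 i) (q.1 * p.2.1 - p.1 * q.2.1)
        (fun i => bd _ _ (hp.2.2 i) (hq.2.2 i)) (bd _ _ hp.2.1 hq.2.1)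
      have hF : ∀ u : Fin m → ℝ, (τ u p ≤ τ u q ↔
          0 ≤ ∑ i, ((q.1 * p.2.2 i - p.1 * q.2.2 i : ℤ) : ℝ) * u i +
            ((q.1 * p.2.1 - p.1 * q.2.1 : ℤ) : ℝ)) := by
        intro u
        have e : ∑ i, ((q.1 * p.2.2 i - p.1 * q.2.2 i : ℤ) : ℝ) * u i +
            ((q.1 * p.2.1 - p.1 * q.2.1 : ℤ) : ℝ) = q.1 * F u p - p.1 * F u q := by
          simp only [F, mul_add, Finset.mul_sum]
          push_cast
          rw [show ∑ i, ((q.1 : ℝ) * p.2.2 i - p.1 * q.2.2 i) * u i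
            = ∑ i, (q.1 : ℝ) * (p.2.2 i * u i) - ∑ i, (p.1 : ℝ) * (q.2.2 i * u i) by
              rw [← Finset.sum_sub_distrib]; exact Finset.sum_congr rfl fun i _ => by ring]
          ring
        rw [e]
        simp only [τ]
        rw [div_le_div_iff₀ hp1 hq1]
        constructor <;> intro h <;> linarith
      rw [hF, hF]
      exact hs
    have hSne : S.Nonempty := ⟨(1, 0, fun _ => 0), (hmem _).2
      ⟨⟨le_refl _, by simpa using hC⟩, by simp, by simp⟩⟩
    obtain ⟨p, hp, q, hq, k, hcut⟩ := exists_same_cut S hSne _ _ hτ (x 0)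
    obtain ⟨s, hs⟩ : ∃ s, s = (τ y p + τ y q) / 2 + (k : ℝ) := ⟨_, rfl⟩
    have hcut := hcut s hs
    have hden : ∀ p ∈ S, ∃ z : ℤ, τ y p * ((C.factorial * gridDen m (2 * C * C) : ℕ) : ℝ) = z := by
      intro p hp
      rw [hmem] at hp
      choose z hz using hy
      obtain ⟨d, hd⟩ : p.1 ∣ (C.factorial : ℤ) := by
        have := Nat.dvd_factorial (m := p.1.toNat) (n := C) (by omega) (by omega)
        have h2 : ((p.1.toNat : ℕ) : ℤ) ∣ (C.factorial : ℤ) := by exact_mod_cast this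
        rwa [Int.toNat_of_nonneg (by omega)] at h2
      have hp1 : (p.1 : ℝ) ≠ 0 := by
        have : (0 : ℝ) < p.1 := by exact_mod_cast hp.1.1
        exact this.ne'
      have hd' : (C.factorial : ℝ) = p.1 * d := by exact_mod_cast hd
      refine ⟨-(∑ i, p.2.2 i * z i + p.2.1 * gridDen m (2 * C * C)) * d, ?_⟩
      simp only [τ, F]
      push_cast
      simp only [← hz]
      rw [hd', show ∑ i, (p.2.2 i : ℝ) * (y i * (gridDen m (2 * C * C) : ℝ))
        = (∑ i, (p.2.2 i : ℝ) * y i) * (gridDen m (2 * C * C) : ℝ) by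
          rw [Finset.sum_mul]; exact Finset.sum_congr rfl fun i _ => by ring]
      field_simp
    refine ⟨Fin.cons s y, ?_, ?_⟩
    · intro i
      refine Fin.cases ?_ (fun i => ?_) i
      · obtain ⟨z1, hz1⟩ := hden p hp
        obtain ⟨z2, hz2⟩ := hden q hq
        refine ⟨z1 + z2 + k * (2 * C.factorial * gridDen m (2 * C * C) : ℕ), ?_⟩
        simp only [Fin.cons_zero, gridDen, hs]
        push_cast at hz1 hz2 ⊢
        rw [← hz1, ← hz2]
        ring
      · obtain ⟨z, hz⟩ := hy i
        refine ⟨z * (2 * C.factorial : ℕ), ?_⟩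
        simp only [Fin.cons_succ, gridDen]
        push_cast
        rw [← hz]
        ring
    · intro a b ha hb
      rw [Fin.sum_univ_succ, Fin.sum_univ_succ]
      simp only [Fin.cons_zero, Fin.cons_succ]
      have e1 : ∀ i : Fin m, x i.succ = Fin.tail x i := fun i => rfl
      simp only [e1]
      rcases lt_trichotomy (a 0) 0 with h0 | h0 | h0
      · have hr : ((-a 0, -b, fun i => -a i.succ) : ℤ × ℤ × (Fin m → ℤ)) ∈ S := by
          rw [hmem]
          refine ⟨⟨by simp only; omega, ?_⟩, by simpa using hb,
            fun i => by simpa using ha i.succ⟩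
          exact (neg_le_abs _).trans (ha 0)
        have h := (hcut _ hr).2
        have hpos : (0 : ℝ) < ((-a 0 : ℤ) : ℝ) := by exact_mod_cast (by omega : 0 < -a 0)
        simp only [τ, F] at h
        rw [le_div_iff₀ hpos, le_div_iff₀ hpos] at h
        push_cast at h
        simp only [neg_mul, Finset.sum_neg_distrib] at h
        constructor
        · intro h'
          have := h.1 (by linarith)
          linarith
        · intro h'
          have := h.2 (by linarith)
          linarith
      · simp only [h0, Int.cast_zero, zero_mul, zero_add]
        have hCC : (C : ℤ) ≤ ((2 * C * C : ℕ) : ℤ) := by exact_mod_cast (by nlinarith : C ≤ 2 * C * C)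
        exact hsign _ _ (fun i => (ha i.succ).trans hCC) (hb.trans hCC)
      · have hr : ((a 0, b, fun i => a i.succ) : ℤ × ℤ × (Fin m → ℤ)) ∈ S := by
          rw [hmem]
          exact ⟨⟨h0, (le_abs_self _).trans (ha 0)⟩, hb, fun i => ha i.succ⟩
        have h := (hcut _ hr).1
        have hpos : (0 : ℝ) < ((a 0 : ℤ) : ℝ) := by exact_mod_cast h0
        simp only [τ, F] at h
        rw [div_le_iff₀ hpos, div_le_iff₀ hpos] at h
        constructor
        · intro h'
          have := h.1 (by linarith)
          linarith
        · intro h'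
          have := h.2 (by linarith)
          linarith

/-- Finitely many reals in `[0, 1]` can be replaced by multiples `Y i / N` of a fixed fraction
so that the order, the endpoints and all instances of the Łukasiewicz operations are kept. -/
theorem exists_grid_values {ι : Type} [Fintype ι] (x : ι → ℝ) (hx : ∀ i, x i ∈ Set.Icc (0 : ℝ) 1)
    (N : ℕ) (hN : N = gridDen (Fintype.card ι) 3) :
    ∃ Y : ι → ℕ, (∀ i, Y i ≤ N) ∧ (∀ i j, x i ≤ x j ↔ Y i ≤ Y j) ∧
      (∀ i, x i = 1 ↔ Y i = N) ∧ (∀ i, x i = 0 ↔ Y i = 0) ∧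
      (∀ i j k, x i = max 0 (x j + x k - 1) → Y i = Y j + Y k - N) ∧
      (∀ i j k, x i = min 1 (1 - x j + x k) → Y i = min N (N - Y j + Y k)) := by
  classical
  obtain ⟨y, hy, hsign⟩ := exists_grid_point (Fintype.card ι) 3 (by norm_num)
    (x ∘ (Fintype.equivFin ι).symm)
  rw [← hN] at hy
  have hN0 : 0 < N := hN ▸ gridDen_pos _ _
  have hNr : (0 : ℝ) < N := by exact_mod_cast hN0
  choose z hz using fun i => hy (Fintype.equivFin ι i)
  -- The indices `i`, `j`, `k` may coincide, so a coefficient can be as large as `3`.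
  have form : ∀ (i j k : ι) (p q r s : ℤ), |p| ≤ 1 → |q| ≤ 1 → |r| ≤ 1 → |s| ≤ 1 →
      (0 ≤ p * x i + q * x j + r * x k + s ↔ 0 ≤ p * z i + q * z j + r * z k + s * N) := by
    intro i j k p q r s hp hq hr hs
    have h := hsign (fun l => (if l = Fintype.equivFin ι i then p else 0)
      + (if l = Fintype.equivFin ι j then q else 0)
      + (if l = Fintype.equivFin ι k then r else 0)) s ?_ (hs.trans (by norm_num))
    · push_cast at h
      simp only [add_mul, Finset.sum_add_distrib, ite_mul, zero_mul, Finset.sum_ite_eq',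
        Finset.mem_univ, if_true, Function.comp_apply, Equiv.symm_apply_apply] at h
      rw [h]
      have e : ((p * z i + q * z j + r * z k + s * N : ℤ) : ℝ) =
          (p * y (Fintype.equivFin ι i) + q * y (Fintype.equivFin ι j) +
            r * y (Fintype.equivFin ι k) + s) * N := by
        push_cast
        rw [← hz, ← hz, ← hz]
        ring
      rw [← Int.cast_nonneg_iff (R := ℝ), e]
      exact (mul_nonneg_iff_of_pos_right hNr).symm
    · intro l
      rw [abs_le] at hp hq hr ⊢
      push_cast
      constructor <;> split_ifs <;> omega
  have h0 : ∀ i, 0 ≤ z i := by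
    intro i
    have := form i i i 1 0 0 0 (by simp) (by simp) (by simp) (by simp)
    simp only [Int.cast_one, Int.cast_zero, zero_mul, one_mul, add_zero] at this
    exact this.1 (hx i).1
  have hle : ∀ i j, x i ≤ x j ↔ z i ≤ z j := by
    intro i j
    have := form i j j (-1) 1 0 0 (by simp) (by simp) (by simp) (by simp)
    push_cast at this
    constructor
    · intro h; have := this.1 (by linarith); linarith
    · intro h; have := this.2 (by linarith); linarith
  have h1 : ∀ i, z i ≤ N ∧ (1 ≤ x i ↔ N ≤ z i) := by
    intro i
    have := form i i i (-1) 0 0 1 (by simp) (by simp) (by simp) (by simp)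
    have h2 := form i i i 1 0 0 (-1) (by simp) (by simp) (by simp) (by simp)
    push_cast at this h2
    refine ⟨by have := this.1 (by linarith [(hx i).2]); linarith, ?_⟩
    constructor
    · intro h; have := h2.1 (by linarith); linarith
    · intro h; have := h2.2 (by linarith); linarith
  have h00 : ∀ i, x i ≤ 0 ↔ z i ≤ 0 := by
    intro i
    have := form i i i (-1) 0 0 0 (by simp) (by simp) (by simp) (by simp)
    push_cast at this
    constructor
    · intro h; have := this.1 (by linarith); linarith
    · intro h; have := this.2 (by linarith); linarith
  have hcast : ∀ i, ((z i).toNat : ℤ) = z i := fun i => Int.toNat_of_nonneg (h0 i)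
  refine ⟨fun i => (z i).toNat, fun i => ?_, fun i j => ?_, fun i => ?_, fun i => ?_, ?_, ?_⟩
  · have := h1 i; have := hcast i; simp only; omega
  · rw [hle]; have := hcast i; have := hcast j; simp only; omega
  · have h := h1 i
    have e : x i = 1 ↔ 1 ≤ x i := ⟨fun h => h.ge, fun h => le_antisymm (hx i).2 h⟩
    rw [e, h.2]; have := hcast i; simp only; omega
  · have e : x i = 0 ↔ x i ≤ 0 := ⟨fun h => h.le, fun h => le_antisymm h (hx i).1⟩
    rw [e, h00]; have := hcast i; have := h0 i; simp only; omega
  · intro i j k h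
    have A := form i j k 1 (-1) (-1) 1 (by simp) (by simp) (by simp) (by simp)
    have B := form i j k (-1) 1 1 (-1) (by simp) (by simp) (by simp) (by simp)
    push_cast at A B
    have a := A.1 (by linarith [le_max_right 0 (x j + x k - 1)])
    have hi := hcast i
    have hj := hcast j
    have hk := hcast k
    have := h0 i
    rcases max_choice 0 (x j + x k - 1) with h' | h' <;> rw [h'] at h
    · have := (h00 i).1 h.le
      simp only; omega
    · have := B.1 (by linarith)
      simp only; omega
  · intro i j k h
    have A := form i j k 1 1 (-1) (-1) (by simp) (by simp) (by simp) (by simp)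
    have B := form i j k (-1) (-1) 1 1 (by simp) (by simp) (by simp) (by simp)
    push_cast at A B
    have b := B.1 (by linarith [min_le_right 1 (1 - x j + x k)])
    have hi := hcast i
    have hj := hcast j
    have hk := hcast k
    have := h1 i
    have := h1 j
    rcases min_choice 1 (1 - x j + x k) with h' | h' <;> rw [h'] at h
    · have := (h1 i).2.1 h.ge
      simp only; omega
    · have := A.1 (by linarith)
      simp only; omega

/-! ### Witnessed models -/

open Filter Topology in
theorem exists_hyperfilter_lim (f : ℕ → ℝ) (hf : ∀ i, f i ∈ Set.Icc (0 : ℝ) 1) :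
    ∃ a, Tendsto f (hyperfilter ℕ : Filter ℕ) (𝓝 a) := by
  obtain ⟨a, -, ha⟩ := (isCompact_Icc (a := (0 : ℝ)) (b := 1)).ultrafilter_le_nhds
    ((hyperfilter ℕ).map f) (le_principal_iff.2
      (show ∀ᶠ i in (hyperfilter ℕ : Filter ℕ), f i ∈ Set.Icc (0 : ℝ) 1 from
        Eventually.of_forall hf))
  exact ⟨a, ha⟩

/-- Every value of a modal formula is attained at an accessible world, unless it is the value
that the formula takes when there are no accessible worlds. This is weaker than
`LukModel.Witnessed`, which fails at worlds without successors. -/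
def LukModel.Attained (M : LukModel ℕ) : Prop :=
  ∀ (w : M.W) (φ : MFormula ℕ),
    (M.e w (.fBox φ) = 1 ∨ ∃ u, M.R w u ∧ M.e u φ = M.e w (.fBox φ)) ∧
    (M.e w (.fDia φ) = 0 ∨ ∃ u, M.R w u ∧ M.e u φ = M.e w (.fDia φ))

theorem isGLB_of_attained {W : Type} {R : W → Prop} {g : W → ℝ} {b : ℝ} (hb : b ≤ 1)
    (hle : ∀ u, R u → b ≤ g u) (hatt : b = 1 ∨ ∃ u, R u ∧ g u = b) :
    IsGLB (insert (1 : ℝ) {a | ∃ u, R u ∧ g u = a}) b := by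
  refine IsLeast.isGLB ⟨?_, ?_⟩
  · rcases hatt with h | h
    · exact Or.inl h
    · exact Or.inr h
  · rintro a (rfl | ⟨u, hu, rfl⟩)
    exacts [hb, hle u hu]

theorem isLUB_of_attained {W : Type} {R : W → Prop} {g : W → ℝ} {b : ℝ} (hb : 0 ≤ b)
    (hle : ∀ u, R u → g u ≤ b) (hatt : b = 0 ∨ ∃ u, R u ∧ g u = b) :
    IsLUB (insert (0 : ℝ) {a | ∃ u, R u ∧ g u = a}) b := by
  refine IsGreatest.isLUB ⟨?_, ?_⟩
  · rcases hatt with h | h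
    · exact Or.inl h
    · exact Or.inr h
  · rintro a (rfl | ⟨u, hu, rfl⟩)
    exacts [hb, hle u hu]

open Filter Topology in
/-- Every world of a model has the same values as a world of a model with attained modal values,
namely its diagonal image in an ultrapower: worlds are sequences of worlds, and values are limits
of the componentwise values along a nonprincipal ultrafilter. Infima and suprema are attained
componentwise up to an error tending to `0`, hence attained in the limit. -/
theorem exists_attained (M : LukModel ℕ) (v : M.W) :
    ∃ (M' : LukModel ℕ) (v' : M'.W), M'.Attained ∧ ∀ φ, M'.e v' φ = M.e v φ := by
  classical
  choose L hL using fun (w : ℕ → M.W) (φ : MFormula ℕ) =>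
    exists_hyperfilter_lim (fun i => M.e (w i) φ) (fun i => M.mem01 _ _)
  let U : Filter ℕ := (hyperfilter ℕ : Filter ℕ)
  let R' : (ℕ → M.W) → (ℕ → M.W) → Prop := fun w u => ∀ᶠ i in U, M.R (w i) (u i)
  have h01 : ∀ w φ, L w φ ∈ Set.Icc (0 : ℝ) 1 := fun w φ =>
    isClosed_Icc.mem_of_tendsto (hL w φ) (Eventually.of_forall fun i => M.mem01 _ _)
  have hε : Tendsto (fun i : ℕ => 1 / ((i : ℝ) + 1)) U (𝓝 0) :=
    tendsto_one_div_add_atTop_nhds_zero_nat.mono_left Nat.hyperfilter_le_atTop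
  have hboxle : ∀ w u φ, R' w u → L w (.fBox φ) ≤ L u φ := fun w u φ h =>
    le_of_tendsto_of_tendsto (hL w _) (hL u φ)
      (h.mono fun i hi => (M.e_box (w i) φ).1 (Or.inr ⟨_, hi, rfl⟩))
  have hdiale : ∀ w u φ, R' w u → L u φ ≤ L w (.fDia φ) := fun w u φ h =>
    le_of_tendsto_of_tendsto (hL u φ) (hL w _)
      (h.mono fun i hi => (M.e_dia (w i) φ).1 (Or.inr ⟨_, hi, rfl⟩))
  have hboxatt : ∀ w φ, L w (.fBox φ) = 1 ∨ ∃ u, R' w u ∧ L u φ = L w (.fBox φ) := by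
    intro w φ
    let P : ℕ → M.W → Prop := fun i u =>
      M.R (w i) u ∧ M.e u φ ≤ M.e (w i) (.fBox φ) + 1 / ((i : ℝ) + 1)
    by_cases hP : ∀ᶠ i in U, ∃ u, P i u
    · right
      let u : ℕ → M.W := fun i => if h : ∃ u, P i u then h.choose else w i
      have hu : ∀ᶠ i in U, P i (u i) := hP.mono fun i hi => by
        simp only [u, dif_pos hi]
        exact hi.choose_spec
      have hR : R' w u := hu.mono fun i hi => hi.1
      refine ⟨u, hR, le_antisymm ?_ (hboxle w u φ hR)⟩
      have := le_of_tendsto_of_tendsto (hL u φ) ((hL w (.fBox φ)).add hε)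
        (hu.mono fun i hi => hi.2)
      simpa using this
    · left
      have hP' : ∀ᶠ i in U, ¬ ∃ u, P i u := Ultrafilter.eventually_not.2 hP
      refine le_antisymm (h01 _ _).2 ?_
      have := le_of_tendsto_of_tendsto (tendsto_const_nhds (x := (1 : ℝ)))
        ((hL w (.fBox φ)).add hε) (hP'.mono fun i hi => ?_)
      · simpa using this
      · by_contra hlt
        have hpos : (0 : ℝ) < 1 / ((i : ℝ) + 1) := by positivity
        obtain ⟨b, hb, -, hb'⟩ := (M.e_box (w i) φ).exists_between
          (lt_add_of_pos_right (M.e (w i) (.fBox φ)) hpos)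
        rcases hb with rfl | ⟨u, hu, rfl⟩
        · exact hlt hb'.le
        · exact hi ⟨u, hu, hb'.le⟩
  have hdiaatt : ∀ w φ, L w (.fDia φ) = 0 ∨ ∃ u, R' w u ∧ L u φ = L w (.fDia φ) := by
    intro w φ
    let P : ℕ → M.W → Prop := fun i u =>
      M.R (w i) u ∧ M.e (w i) (.fDia φ) - 1 / ((i : ℝ) + 1) ≤ M.e u φ
    by_cases hP : ∀ᶠ i in U, ∃ u, P i u
    · right
      let u : ℕ → M.W := fun i => if h : ∃ u, P i u then h.choose else w i
      have hu : ∀ᶠ i in U, P i (u i) := hP.mono fun i hi => by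
        simp only [u, dif_pos hi]
        exact hi.choose_spec
      have hR : R' w u := hu.mono fun i hi => hi.1
      refine ⟨u, hR, le_antisymm (hdiale w u φ hR) ?_⟩
      have := le_of_tendsto_of_tendsto ((hL w (.fDia φ)).sub hε) (hL u φ)
        (hu.mono fun i hi => hi.2)
      simpa using this
    · left
      have hP' : ∀ᶠ i in U, ¬ ∃ u, P i u := Ultrafilter.eventually_not.2 hP
      refine le_antisymm ?_ (h01 _ _).1
      have := le_of_tendsto_of_tendsto ((hL w (.fDia φ)).sub hε)
        (tendsto_const_nhds (x := (0 : ℝ))) (hP'.mono fun i hi => ?_)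
      · simpa using this
      · by_contra hlt
        have hpos : (0 : ℝ) < 1 / ((i : ℝ) + 1) := by positivity
        obtain ⟨b, hb, hb', -⟩ := (M.e_dia (w i) φ).exists_between
          (sub_lt_self (M.e (w i) (.fDia φ)) hpos)
        rcases hb with rfl | ⟨u, hu, rfl⟩
        · exact hlt hb'.le
        · exact hi ⟨u, hu, hb'.le⟩
  have uniq : ∀ (w : ℕ → M.W) (φ : MFormula ℕ) (f : ℕ → ℝ) (a : ℝ),
      (∀ i, M.e (w i) φ = f i) → Tendsto f U (𝓝 a) → L w φ = a := by
    intro w φ f a h hf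
    have h1 := hL w φ
    simp only [h] at h1
    exact tendsto_nhds_unique h1 hf
  refine ⟨⟨ℕ → M.W, ⟨fun _ => v⟩, R', L, h01, ?_, ?_, ?_, ?_, ?_, ?_, ?_, ?_⟩, fun _ => v, ?_, ?_⟩
  · exact fun w => uniq w _ _ _ (fun i => M.e_zero _) tendsto_const_nhds
  · exact fun w => uniq w _ _ _ (fun i => M.e_one _) tendsto_const_nhds
  · exact fun w φ ψ => uniq w _ _ _ (fun i => M.e_and _ _ _) ((hL w φ).min (hL w ψ))
  · exact fun w φ ψ => uniq w _ _ _ (fun i => M.e_or _ _ _) ((hL w φ).max (hL w ψ))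
  · exact fun w φ ψ => uniq w _ _ _ (fun i => M.e_mul _ _ _)
      (tendsto_const_nhds.max (((hL w φ).add (hL w ψ)).sub_const 1))
  · exact fun w φ ψ => uniq w _ _ _ (fun i => M.e_imp _ _ _)
      (tendsto_const_nhds.min ((tendsto_const_nhds.sub (hL w φ)).add (hL w ψ)))
  · exact fun w φ => isGLB_of_attained (h01 _ _).2 (fun u hu => hboxle w u φ hu) (hboxatt w φ)
  · exact fun w φ => isLUB_of_attained (h01 _ _).1 (fun u hu => hdiale w u φ hu) (hdiaatt w φ)
  · exact fun w φ => ⟨hboxatt w φ, hdiaatt w φ⟩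
  · exact fun φ => uniq _ _ _ _ (fun i => rfl) tendsto_const_nhds

/-! ### Finite models -/

/-- The value of a formula in the model on a frame `(W, R)` determined by a valuation of the
variables. -/
noncomputable def frameEval {W : Type} (R : W → W → Prop) (val : W → ℕ → ℝ) :
    MFormula ℕ → W → ℝ
  | .var n => fun w => val w n
  | .fZero => fun _ => 0
  | .fOne => fun _ => 1
  | .fAnd φ ψ => fun w => min (frameEval R val φ w) (frameEval R val ψ w)
  | .fOr φ ψ => fun w => max (frameEval R val φ w) (frameEval R val ψ w)
  | .fMul φ ψ => fun w => max 0 (frameEval R val φ w + frameEval R val ψ w - 1)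
  | .fImp φ ψ => fun w => min 1 (1 - frameEval R val φ w + frameEval R val ψ w)
  | .fBox φ => fun w => sInf (insert (1 : ℝ) {a | ∃ u, R w u ∧ frameEval R val φ u = a})
  | .fDia φ => fun w => sSup (insert (0 : ℝ) {a | ∃ u, R w u ∧ frameEval R val φ u = a})

theorem frameEval_mem {W : Type} (R : W → W → Prop) (val : W → ℕ → ℝ)
    (hval : ∀ w n, val w n ∈ Set.Icc (0 : ℝ) 1) (φ : MFormula ℕ) (w : W) :
    frameEval R val φ w ∈ Set.Icc (0 : ℝ) 1 := by
  induction φ generalizing w with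
  | var n => exact hval w n
  | fZero => simp [frameEval]
  | fOne => simp [frameEval]
  | fAnd φ ψ h1 h2 =>
    exact ⟨le_min (h1 w).1 (h2 w).1, (min_le_left _ _).trans (h1 w).2⟩
  | fOr φ ψ h1 h2 =>
    exact ⟨(h1 w).1.trans (le_max_left _ _), max_le (h1 w).2 (h2 w).2⟩
  | fMul φ ψ h1 h2 =>
    exact ⟨le_max_left _ _, max_le zero_le_one (by linarith [(h1 w).2, (h2 w).2])⟩
  | fImp φ ψ h1 h2 =>
    exact ⟨le_min zero_le_one (by linarith [(h1 w).2, (h2 w).1]), min_le_left _ _⟩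
  | fBox φ h =>
    have h0 : (0 : ℝ) ∈ lowerBounds (insert (1 : ℝ) {a | ∃ u, R w u ∧ frameEval R val φ u = a}) := by
      rintro a (rfl | ⟨u, -, rfl⟩)
      exacts [zero_le_one, (h u).1]
    exact ⟨le_csInf (Set.insert_nonempty _ _) fun a ha => h0 ha, csInf_le ⟨0, h0⟩ (Or.inl rfl)⟩
  | fDia φ h =>
    have h1 : (1 : ℝ) ∈ upperBounds (insert (0 : ℝ) {a | ∃ u, R w u ∧ frameEval R val φ u = a}) := by
      rintro a (rfl | ⟨u, -, rfl⟩)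
      exacts [zero_le_one, (h u).2]
    exact ⟨le_csSup ⟨1, h1⟩ (Or.inl rfl), csSup_le (Set.insert_nonempty _ _) fun a ha => h1 ha⟩

/-- The model on a given frame with a given valuation of the variables. -/
noncomputable def frameModel {W : Type} [h : Nonempty W] (R : W → W → Prop) (val : W → ℕ → ℝ)
    (hval : ∀ w n, val w n ∈ Set.Icc (0 : ℝ) 1) : LukModel ℕ where
  W := W
  nonempty := h
  R := R
  e := fun w φ => frameEval R val φ w
  mem01 := fun w φ => frameEval_mem R val hval φ w
  e_zero := fun _ => rfl
  e_one := fun _ => rfl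
  e_and := fun _ _ _ => rfl
  e_or := fun _ _ _ => rfl
  e_mul := fun _ _ _ => rfl
  e_imp := fun _ _ _ => rfl
  e_box := fun w φ => by
    refine isGLB_csInf (Set.insert_nonempty _ _) ⟨0, ?_⟩
    rintro a (rfl | ⟨u, -, rfl⟩)
    exacts [zero_le_one, (frameEval_mem R val hval φ u).1]
  e_dia := fun w φ => by
    refine isLUB_csSup (Set.insert_nonempty _ _) ⟨1, ?_⟩
    rintro a (rfl | ⟨u, -, rfl⟩)
    exacts [zero_le_one, (frameEval_mem R val hval φ u).2]

theorem LukModel.attained_of_finite (M : LukModel ℕ) [Finite M.W] : M.Attained := by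
  intro w φ
  have hfin : {a | ∃ u, M.R w u ∧ M.e u φ = a}.Finite :=
    (Set.finite_range fun u => M.e u φ).subset (by rintro a ⟨u, -, rfl⟩; exact ⟨u, rfl⟩)
  constructor
  · have := (hfin.insert 1).isClosed.isGLB_mem (M.e_box w φ) (Set.insert_nonempty _ _)
    rcases this with h | h
    exacts [Or.inl h, Or.inr h]
  · have := (hfin.insert 0).isClosed.isLUB_mem (M.e_dia w φ) (Set.insert_nonempty _ _)
    rcases this with h | h
    exacts [Or.inl h, Or.inr h]

theorem code_injective : Function.Injective code := by
  intro φ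
  induction φ with
  | var n => intro ψ h; cases ψ <;> simp [code, Nat.pair_eq_pair] at h ⊢; exact h
  | fZero => intro ψ h; cases ψ <;> simp [code, Nat.pair_eq_pair] at h ⊢
  | fOne => intro ψ h; cases ψ <;> simp [code, Nat.pair_eq_pair] at h ⊢
  | fAnd a b iha ihb =>
    intro ψ h; cases ψ <;> simp [code, Nat.pair_eq_pair] at h ⊢; exact ⟨iha h.1, ihb h.2⟩
  | fOr a b iha ihb =>
    intro ψ h; cases ψ <;> simp [code, Nat.pair_eq_pair] at h ⊢; exact ⟨iha h.1, ihb h.2⟩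
  | fMul a b iha ihb =>
    intro ψ h; cases ψ <;> simp [code, Nat.pair_eq_pair] at h ⊢; exact ⟨iha h.1, ihb h.2⟩
  | fImp a b iha ihb =>
    intro ψ h; cases ψ <;> simp [code, Nat.pair_eq_pair] at h ⊢; exact ⟨iha h.1, ihb h.2⟩
  | fBox a iha =>
    intro ψ h; cases ψ <;> simp [code, Nat.pair_eq_pair] at h ⊢; exact iha h
  | fDia a iha =>
    intro ψ h; cases ψ <;> simp [code, Nat.pair_eq_pair] at h ⊢; exact iha h

/-- The worlds of the tree extracted from a model up to depth `D`: a level and a sequence of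
witness choices, of which only those below the level matter. -/
abbrev TreeWorld (D : ℕ) : Type := Fin (D + 1) × (Fin (D + 1) → Fin (D + 1))

/-- The world reached after `k` steps from `v` by the choice sequence `g`, where `s w c` is the
chosen witness at `w` for the formula coded by `c`. -/
def treeWalk {W : Type} (v : W) (s : W → ℕ → W) {D : ℕ} (g : Fin (D + 1) → Fin (D + 1)) :
    ℕ → W
  | 0 => v
  | k + 1 => s (treeWalk v s g k) (g (Fin.ofNat (D + 1) k))

theorem treeWalk_congr {W : Type} (v : W) (s : W → ℕ → W) {D : ℕ}
    (g g' : Fin (D + 1) → Fin (D + 1)) (k : ℕ)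
    (h : ∀ i < k, g (Fin.ofNat (D + 1) i) = g' (Fin.ofNat (D + 1) i)) :
    treeWalk v s g k = treeWalk v s g' k := by
  induction k with
  | zero => rfl
  | succ k ih =>
    simp only [treeWalk]
    rw [ih fun i hi => h i (by omega), h k (by omega)]

theorem treeWalk_update {W : Type} (v : W) (s : W → ℕ → W) {D : ℕ}
    (g : Fin (D + 1) → Fin (D + 1)) (k : ℕ) (hk : k < D + 1) (c : Fin (D + 1)) :
    treeWalk v s (Function.update g (Fin.ofNat (D + 1) k) c) (k + 1) = s (treeWalk v s g k) c := by
  simp only [treeWalk, Function.update_self]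
  rw [treeWalk_congr v s _ g k]
  intro i hi
  refine Function.update_of_ne (fun h => ?_) _ _
  have := congrArg Fin.val h
  simp only [Fin.val_ofNat] at this
  rw [Nat.mod_eq_of_lt (by omega), Nat.mod_eq_of_lt hk] at this
  omega

/-- In a model with attained modal values, the worlds reached from `v` by at most `D` witness
choices carry a finite model that agrees with the given one at `v` on formulas of code at most
`D`. At level `k` the agreement holds for formulas of code at most `D - k`, since codes
grow along subformulas. -/
theorem exists_finite_model (M : LukModel ℕ) (hM : M.Attained) (v : M.W) (D : ℕ) :
    ∃ (M' : LukModel ℕ) (_ : M'.W ≃ TreeWorld D) (v' : M'.W),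
      ∀ φ, code φ ≤ D → M'.e v' φ = M.e v φ := by
  classical
  have hs : ∀ (w : M.W) (c : ℕ), ∃ u : M.W,
      (∀ φ, code (.fBox φ) = c → M.e w (.fBox φ) = 1 ∨ (M.R w u ∧ M.e u φ = M.e w (.fBox φ))) ∧
      (∀ φ, code (.fDia φ) = c → M.e w (.fDia φ) = 0 ∨ (M.R w u ∧ M.e u φ = M.e w (.fDia φ))) := by
    intro w c
    by_cases hc : ∃ φ, code φ = c
    · obtain ⟨χ, rfl⟩ := hc
      cases χ with
      | fBox φ =>
        rcases (hM w φ).1 with h | ⟨u, hu⟩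
        · refine ⟨w, fun ψ hψ => ?_, fun ψ hψ => ?_⟩
          · cases code_injective hψ; exact Or.inl h
          · cases code_injective hψ
        · refine ⟨u, fun ψ hψ => ?_, fun ψ hψ => ?_⟩
          · cases code_injective hψ; exact Or.inr hu
          · cases code_injective hψ
      | fDia φ =>
        rcases (hM w φ).2 with h | ⟨u, hu⟩
        · refine ⟨w, fun ψ hψ => ?_, fun ψ hψ => ?_⟩
          · cases code_injective hψ
          · cases code_injective hψ; exact Or.inl h
        · refine ⟨u, fun ψ hψ => ?_, fun ψ hψ => ?_⟩
          · cases code_injective hψ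
          · cases code_injective hψ; exact Or.inr hu
      | _ => refine ⟨w, fun ψ hψ => ?_, fun ψ hψ => ?_⟩ <;> cases code_injective hψ
    · exact ⟨w, fun φ h => absurd ⟨_, h⟩ hc, fun φ h => absurd ⟨_, h⟩ hc⟩
  choose s hsb hsd using hs
  let ω : TreeWorld D → M.W := fun p => treeWalk v s p.2 p.1
  -- Edges go up one level but need not extend the choice sequence: the bounds on modal
  -- values only use that edges project to edges of `M`.
  let R' : TreeWorld D → TreeWorld D → Prop := fun p q =>
    (q.1 : ℕ) = p.1 + 1 ∧ M.R (ω p) (ω q)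
  let val : TreeWorld D → ℕ → ℝ := fun p n => M.e (ω p) (.var n)
  have hval : ∀ p n, val p n ∈ Set.Icc (0 : ℝ) 1 := fun p n => M.mem01 _ _
  have hnext : ∀ (p : TreeWorld D) (c : ℕ), c + p.1 ≤ D → 1 ≤ c →
      ∃ q : TreeWorld D, (q.1 : ℕ) = p.1 + 1 ∧ ω q = s (ω p) c := by
    intro p c h hc
    refine ⟨(⟨p.1 + 1, by omega⟩,
      Function.update p.2 (Fin.ofNat (D + 1) p.1) ⟨c, by omega⟩), rfl, ?_⟩
    exact treeWalk_update v s p.2 p.1 p.1.2 ⟨c, by omega⟩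
  have key : ∀ (φ : MFormula ℕ) (p : TreeWorld D), code φ + p.1 ≤ D →
      frameEval R' val φ p = M.e (ω p) φ := by
    intro φ
    induction φ with
    | var n => intro p _; rfl
    | fZero => intro p _; rw [frameEval, M.e_zero]
    | fOne => intro p _; rw [frameEval, M.e_one]
    | fAnd φ ψ h1 h2 =>
      intro p hp
      have a1 := Nat.right_le_pair 3 (Nat.pair (code φ) (code ψ))
      have a2 := Nat.left_le_pair (code φ) (code ψ)
      have a3 := Nat.right_le_pair (code φ) (code ψ)
      simp only [code] at hp
      simp only [frameEval]
      rw [M.e_and, h1 p (by omega), h2 p (by omega)]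
    | fOr φ ψ h1 h2 =>
      intro p hp
      have a1 := Nat.right_le_pair 4 (Nat.pair (code φ) (code ψ))
      have a2 := Nat.left_le_pair (code φ) (code ψ)
      have a3 := Nat.right_le_pair (code φ) (code ψ)
      simp only [code] at hp
      simp only [frameEval]
      rw [M.e_or, h1 p (by omega), h2 p (by omega)]
    | fMul φ ψ h1 h2 =>
      intro p hp
      have a1 := Nat.right_le_pair 5 (Nat.pair (code φ) (code ψ))
      have a2 := Nat.left_le_pair (code φ) (code ψ)
      have a3 := Nat.right_le_pair (code φ) (code ψ)
      simp only [code] at hp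
      simp only [frameEval]
      rw [M.e_mul, h1 p (by omega), h2 p (by omega)]
    | fImp φ ψ h1 h2 =>
      intro p hp
      have a1 := Nat.right_le_pair 6 (Nat.pair (code φ) (code ψ))
      have a2 := Nat.left_le_pair (code φ) (code ψ)
      have a3 := Nat.right_le_pair (code φ) (code ψ)
      simp only [code] at hp
      simp only [frameEval]
      rw [M.e_imp, h1 p (by omega), h2 p (by omega)]
    | fBox φ h =>
      intro p hp
      have a1 : 7 + code φ ≤ code (.fBox φ) := Nat.add_le_pair 7 (code φ)
      refine ((frameModel R' val hval).e_box p φ).unique (isGLB_of_attained (M.mem01 _ _).2 ?_ ?_)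
      · intro q hq
        change _ ≤ frameEval R' val φ q
        rw [h q (by have := hq.1; omega)]
        exact (M.e_box (ω p) φ).1 (Or.inr ⟨_, hq.2, rfl⟩)
      · obtain ⟨q, hq1, hq2⟩ := hnext p (code (.fBox φ)) hp (by omega)
        refine (hsb (ω p) _ φ rfl).imp id fun hR => ⟨q, ⟨hq1, ?_⟩, ?_⟩
        · rw [hq2]; exact hR.1
        · change frameEval R' val φ q = _
          rw [h q (by omega), hq2]; exact hR.2
    | fDia φ h =>
      intro p hp
      have a1 : 8 + code φ ≤ code (.fDia φ) := Nat.add_le_pair 8 (code φ)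
      refine ((frameModel R' val hval).e_dia p φ).unique (isLUB_of_attained (M.mem01 _ _).1 ?_ ?_)
      · intro q hq
        change frameEval R' val φ q ≤ _
        rw [h q (by have := hq.1; omega)]
        exact (M.e_dia (ω p) φ).1 (Or.inr ⟨_, hq.2, rfl⟩)
      · obtain ⟨q, hq1, hq2⟩ := hnext p (code (.fDia φ)) hp (by omega)
        refine (hsd (ω p) _ φ rfl).imp id fun hR => ⟨q, ⟨hq1, ?_⟩, ?_⟩
        · rw [hq2]; exact hR.1
        · change frameEval R' val φ q = _
          rw [h q (by omega), hq2]; exact hR.2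
  exact ⟨frameModel R' val hval, Equiv.refl _, (0, fun _ => 0),
    fun φ hφ => key φ (0, fun _ => 0) (by simpa using hφ)⟩

/-! ### Value tables -/

/-- Total decoding of formula codes; numbers that are not codes have an arbitrary value, but
every number with a connective as tag is read as a formula with that connective. -/
def decodeFormula (c : ℕ) : MFormula ℕ :=
  if _h : c.unpair.1 = 0 then .var c.unpair.2
  else if c.unpair.1 = 1 then .fZero
  else if c.unpair.1 = 2 then .fOne
  else if c.unpair.1 = 3 then
    .fAnd (decodeFormula c.unpair.2.unpair.1) (decodeFormula c.unpair.2.unpair.2)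
  else if c.unpair.1 = 4 then
    .fOr (decodeFormula c.unpair.2.unpair.1) (decodeFormula c.unpair.2.unpair.2)
  else if c.unpair.1 = 5 then
    .fMul (decodeFormula c.unpair.2.unpair.1) (decodeFormula c.unpair.2.unpair.2)
  else if c.unpair.1 = 6 then
    .fImp (decodeFormula c.unpair.2.unpair.1) (decodeFormula c.unpair.2.unpair.2)
  else if c.unpair.1 = 7 then .fBox (decodeFormula c.unpair.2)
  else if c.unpair.1 = 8 then .fDia (decodeFormula c.unpair.2)
  else .fZero
termination_by c
decreasing_by
  all_goals
    have h1 := Nat.unpair_add_le c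
    have h2 := Nat.unpair_left_le c.unpair.2
    have h3 := Nat.unpair_right_le c.unpair.2
    omega

theorem decodeFormula_code (φ : MFormula ℕ) : decodeFormula (code φ) = φ := by
  induction φ <;> rw [decodeFormula] <;> simp_all [code]

/-- The conditions on the entry at world `w` and formula code `c` for `T` to be the table of
values, in units of `1 / N`, of a model with worlds `0, …, K - 1` and accessibility `r`. The
subtraction for `·` is truncated, which replaces the maximum with `0`. -/
def LocallyCorrect (K N : ℕ) (T : ℕ → ℕ → ℕ) (r : ℕ → ℕ → Prop) (w c : ℕ) : Prop :=
  (c.unpair.1 = 1 → T w c = 0) ∧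
  (c.unpair.1 = 2 → T w c = N) ∧
  (c.unpair.1 = 3 → T w c = min (T w c.unpair.2.unpair.1) (T w c.unpair.2.unpair.2)) ∧
  (c.unpair.1 = 4 → T w c = max (T w c.unpair.2.unpair.1) (T w c.unpair.2.unpair.2)) ∧
  (c.unpair.1 = 5 → T w c = T w c.unpair.2.unpair.1 + T w c.unpair.2.unpair.2 - N) ∧
  (c.unpair.1 = 6 → T w c = min N (N - T w c.unpair.2.unpair.1 + T w c.unpair.2.unpair.2)) ∧
  (c.unpair.1 = 7 → (∀ u < K, r w u → T w c ≤ T u c.unpair.2) ∧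
    (T w c = N ∨ ∃ u < K, r w u ∧ T u c.unpair.2 = T w c)) ∧
  (c.unpair.1 = 8 → (∀ u < K, r w u → T u c.unpair.2 ≤ T w c) ∧
    (T w c = 0 ∨ ∃ u < K, r w u ∧ T u c.unpair.2 = T w c))

/-- A table correct up to code `D` is the value table of a model. -/
theorem exists_model_of_table {K N D : ℕ} (hN : 0 < N) {T : ℕ → ℕ → ℕ} {r : ℕ → ℕ → Prop}
    (hTN : ∀ w c, T w c ≤ N) (hT : ∀ w < K, ∀ c ≤ D, LocallyCorrect K N T r w c)
    {w₀ : ℕ} (hw₀ : w₀ < K) :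
    ∃ (M : LukModel ℕ) (v : M.W), ∀ φ, code φ ≤ D → M.e v φ = (T w₀ (code φ) : ℝ) / N := by
  classical
  have hNr : (0 : ℝ) < N := by exact_mod_cast hN
  let R : Fin K → Fin K → Prop := fun w u => r w u
  let val : Fin K → ℕ → ℝ := fun w n => (T w (code (.var n)) : ℝ) / N
  have h01 : ∀ w c, (T w c : ℝ) / N ∈ Set.Icc (0 : ℝ) 1 := fun w c =>
    ⟨by positivity, (div_le_one hNr).2 (by exact_mod_cast hTN w c)⟩
  have hval : ∀ w n, val w n ∈ Set.Icc (0 : ℝ) 1 := fun w n => h01 _ _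
  have : Nonempty (Fin K) := ⟨⟨w₀, hw₀⟩⟩
  have key : ∀ (φ : MFormula ℕ), code φ ≤ D → ∀ w : Fin K,
      frameEval R val φ w = (T w (code φ) : ℝ) / N := by
    intro φ
    induction φ with
    | var n => intro _ w; rfl
    | fZero =>
      intro h w
      have := (hT w w.2 _ h).1 (by simp [code])
      simp [frameEval, this]
    | fOne =>
      intro h w
      have := (hT w w.2 _ h).2.1 (by simp [code])
      simp [frameEval, this, hNr.ne']
    | fAnd φ ψ h1 h2 =>
      intro h w
      have := (hT w w.2 _ h).2.2.1 (by simp [code])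
      have a1 := Nat.right_le_pair 3 (Nat.pair (code φ) (code ψ))
      have a2 := Nat.left_le_pair (code φ) (code ψ)
      have a3 := Nat.right_le_pair (code φ) (code ψ)
      simp only [code, Nat.unpair_pair] at this h ⊢
      simp only [frameEval]
      rw [h1 (by omega), h2 (by omega), this, min_div_div_right hNr.le]
      push_cast
      rfl
    | fOr φ ψ h1 h2 =>
      intro h w
      have := (hT w w.2 _ h).2.2.2.1 (by simp [code])
      have a1 := Nat.right_le_pair 4 (Nat.pair (code φ) (code ψ))
      have a2 := Nat.left_le_pair (code φ) (code ψ)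
      have a3 := Nat.right_le_pair (code φ) (code ψ)
      simp only [code, Nat.unpair_pair] at this h ⊢
      simp only [frameEval]
      rw [h1 (by omega), h2 (by omega), this, max_div_div_right hNr.le]
      push_cast
      rfl
    | fMul φ ψ h1 h2 =>
      intro h w
      have := (hT w w.2 _ h).2.2.2.2.1 (by simp [code])
      have a1 := Nat.right_le_pair 5 (Nat.pair (code φ) (code ψ))
      have a2 := Nat.left_le_pair (code φ) (code ψ)
      have a3 := Nat.right_le_pair (code φ) (code ψ)
      simp only [code, Nat.unpair_pair] at this h ⊢
      simp only [frameEval]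
      rw [h1 (by omega), h2 (by omega), this]
      rcases le_total N (T w (code φ) + T w (code ψ)) with hle | hle
      · have hle' : (N : ℝ) ≤ T w (code φ) + T w (code ψ) := by exact_mod_cast hle
        rw [Nat.cast_sub hle, max_eq_right]
        · push_cast; field_simp
        · rw [← add_div, sub_nonneg, le_div_iff₀ hNr]; linarith
      · have hle' : (T w (code φ) + T w (code ψ) : ℝ) ≤ N := by exact_mod_cast hle
        rw [Nat.sub_eq_zero_of_le hle, max_eq_left]
        · simp
        · rw [← add_div, sub_nonpos, div_le_iff₀ hNr]; linarith
    | fImp φ ψ h1 h2 =>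
      intro h w
      have := (hT w w.2 _ h).2.2.2.2.2.1 (by simp [code])
      have a1 := Nat.right_le_pair 6 (Nat.pair (code φ) (code ψ))
      have a2 := Nat.left_le_pair (code φ) (code ψ)
      have a3 := Nat.right_le_pair (code φ) (code ψ)
      simp only [code, Nat.unpair_pair] at this h ⊢
      simp only [frameEval]
      rw [h1 (by omega), h2 (by omega), this]
      push_cast [Nat.cast_sub (hTN w (code φ))]
      rw [← min_div_div_right hNr.le]
      congr 1 <;> field_simp
    | fBox φ h1 =>
      intro h w
      have := (hT w w.2 _ h).2.2.2.2.2.2.1 (by simp [code])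
      have a1 := Nat.right_le_pair 7 (code φ)
      have hφ : code φ ≤ D := a1.trans h
      simp only [code, Nat.unpair_pair] at this h ⊢
      refine ((frameModel R val hval).e_box w φ).unique (isGLB_of_attained (h01 _ _).2 ?_ ?_)
      · intro (u : Fin K) hu
        change _ ≤ frameEval R val φ u
        rw [h1 hφ u]
        gcongr
        exact this.1 u.val u.isLt hu
      · refine this.2.imp (fun h => by rw [h, div_self hNr.ne']) ?_
        rintro ⟨u, hu, hr, he⟩
        refine ⟨⟨u, hu⟩, hr, ?_⟩
        change frameEval R val φ ⟨u, hu⟩ = _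
        rw [h1 hφ, he]
    | fDia φ h1 =>
      intro h w
      have := (hT w w.2 _ h).2.2.2.2.2.2.2 (by simp [code])
      have a1 := Nat.right_le_pair 8 (code φ)
      have hφ : code φ ≤ D := a1.trans h
      simp only [code, Nat.unpair_pair] at this h ⊢
      refine ((frameModel R val hval).e_dia w φ).unique (isLUB_of_attained (h01 _ _).1 ?_ ?_)
      · intro (u : Fin K) hu
        change frameEval R val φ u ≤ _
        rw [h1 hφ u]
        gcongr
        exact this.1 u.val u.isLt hu
      · refine this.2.imp (fun h => by rw [h]; simp) ?_
        rintro ⟨u, hu, hr, he⟩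
        refine ⟨⟨u, hu⟩, hr, ?_⟩
        change frameEval R val φ ⟨u, hu⟩ = _
        rw [h1 hφ, he]
  exact ⟨frameModel R val hval, ⟨w₀, hw₀⟩, fun φ hφ => key φ hφ ⟨w₀, hw₀⟩⟩

/-- The values of a finite model, replaced by grid values in the same order type, form a correct
table in which exactly the same entries have value `1`. -/
theorem exists_table_of_model {K N D : ℕ} (hN : N = gridDen (K * (D + 1)) 3) (M : LukModel ℕ)
    (E : M.W ≃ Fin K) :
    ∃ (Y : Fin K × Fin (D + 1) → ℕ) (r : Fin K → Fin K → Prop),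
      (∀ p, Y p ≤ N) ∧
      (∀ (w : Fin K) (φ : MFormula ℕ) (h : code φ < D + 1),
        M.e (E.symm w) φ = 1 ↔ Y (w, ⟨code φ, h⟩) = N) ∧
      ∀ (T : ℕ → ℕ → ℕ) (r' : ℕ → ℕ → Prop), (∀ w c, T w.1 c.1 = Y (w, c)) →
        (∀ w u, r' w.1 u.1 ↔ r w u) → ∀ w < K, ∀ c ≤ D, LocallyCorrect K N T r' w c := by
  have : Finite M.W := Finite.of_equiv _ E.symm
  have hatt := M.attained_of_finite
  let x : Fin K × Fin (D + 1) → ℝ := fun p => M.e (E.symm p.1) (decodeFormula p.2)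
  obtain ⟨Y, hYN, hYle, hY1, hY0, hYmul, hYimp⟩ := exists_grid_values x (fun p => M.mem01 _ _) N
    (by rw [hN]; simp)
  refine ⟨Y, fun w u => M.R (E.symm w) (E.symm u), hYN, ?_, ?_⟩
  · intro w φ h
    rw [← hY1]
    simp only [x]
    rw [decodeFormula_code]
  intro T r' hT hr w hw c hc
  have hYeq : ∀ p q, x p = x q → Y p = Y q := fun p q h =>
    le_antisymm ((hYle p q).1 h.le) ((hYle q p).1 h.ge)
  have h1 := Nat.unpair_right_le c
  have h2 := Nat.unpair_left_le c.unpair.2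
  have h3 := Nat.unpair_right_le c.unpair.2
  have hTY : ∀ (w c : ℕ) (hw : w < K) (hc : c < D + 1), T w c = Y (⟨w, hw⟩, ⟨c, hc⟩) :=
    fun w c hw hc => hT ⟨w, hw⟩ ⟨c, hc⟩
  have eC := hTY w c hw (by omega)
  have eA := hTY w c.unpair.2.unpair.1 hw (by omega)
  have eB := hTY w c.unpair.2.unpair.2 hw (by omega)
  have eX : ∀ (u : ℕ) (hu : u < K), T u c.unpair.2 = Y (⟨u, hu⟩, ⟨c.unpair.2, by omega⟩) :=
    fun u hu => hTY u c.unpair.2 hu (by omega)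
  have hrr : ∀ (u : ℕ) (hu : u < K), r' w u ↔ M.R (E.symm ⟨w, hw⟩) (E.symm ⟨u, hu⟩) :=
    fun u hu => hr ⟨w, hw⟩ ⟨u, hu⟩
  have hC : x (⟨w, hw⟩, ⟨c, by omega⟩) = M.e (E.symm ⟨w, hw⟩) (decodeFormula c) := rfl
  rw [decodeFormula] at hC
  refine ⟨fun t => ?_, fun t => ?_, fun t => ?_, fun t => ?_, fun t => ?_, fun t => ?_,
    fun t => ?_, fun t => ?_⟩
  · simp only [t] at hC
    norm_num at hC
    rw [M.e_zero] at hC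
    rw [eC]; exact (hY0 _).1 hC
  · simp only [t] at hC
    norm_num at hC
    rw [M.e_one] at hC
    rw [eC]; exact (hY1 _).1 hC
  · simp only [t] at hC
    norm_num at hC
    rw [M.e_and] at hC
    rw [eC, eA, eB]
    rcases min_choice (M.e (E.symm ⟨w, hw⟩) (decodeFormula c.unpair.2.unpair.1))
      (M.e (E.symm ⟨w, hw⟩) (decodeFormula c.unpair.2.unpair.2)) with h | h
    · rw [h] at hC
      rw [min_eq_left ((hYle _ _).1 (min_eq_left_iff.1 h))]
      exact hYeq _ _ hC
    · rw [h] at hC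
      rw [min_eq_right ((hYle _ _).1 (min_eq_right_iff.1 h))]
      exact hYeq _ _ hC
  · simp only [t] at hC
    norm_num at hC
    rw [M.e_or] at hC
    rw [eC, eA, eB]
    rcases max_choice (M.e (E.symm ⟨w, hw⟩) (decodeFormula c.unpair.2.unpair.1))
      (M.e (E.symm ⟨w, hw⟩) (decodeFormula c.unpair.2.unpair.2)) with h | h
    · rw [h] at hC
      rw [max_eq_left ((hYle _ _).1 (max_eq_left_iff.1 h))]
      exact hYeq _ _ hC
    · rw [h] at hC
      rw [max_eq_right ((hYle _ _).1 (max_eq_right_iff.1 h))]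
      exact hYeq _ _ hC
  · simp only [t] at hC
    norm_num at hC
    rw [M.e_mul] at hC
    rw [eC, eA, eB]
    exact hYmul _ _ _ hC
  · simp only [t] at hC
    norm_num at hC
    rw [M.e_imp] at hC
    rw [eC, eA, eB]
    exact hYimp _ _ _ hC
  · simp only [t] at hC
    norm_num at hC
    constructor
    · intro u hu hru
      rw [eC, eX u hu]
      refine (hYle _ _).1 ?_
      rw [hC]
      exact (M.e_box _ _).1 (Or.inr ⟨_, (hrr u hu).1 hru, rfl⟩)
    · rw [eC]
      rcases (hatt (E.symm ⟨w, hw⟩) (decodeFormula c.unpair.2)).1 with h | ⟨u, hu, he⟩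
      · exact Or.inl ((hY1 _).1 (hC.trans h))
      · refine Or.inr ⟨E u, (E u).2, (hrr _ (E u).2).2 (by simpa using hu), ?_⟩
        rw [eX _ (E u).2]
        refine hYeq _ _ ?_
        rw [hC, ← he]
        simp [x]
  · simp only [t] at hC
    norm_num at hC
    constructor
    · intro u hu hru
      rw [eC, eX u hu]
      refine (hYle _ _).1 ?_
      rw [hC]
      exact (M.e_dia _ _).1 (Or.inr ⟨_, (hrr u hu).1 hru, rfl⟩)
    · rw [eC]
      rcases (hatt (E.symm ⟨w, hw⟩) (decodeFormula c.unpair.2)).2 with h | ⟨u, hu, he⟩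
      · exact Or.inl ((hY0 _).1 (hC.trans h))
      · refine Or.inr ⟨E u, (E u).2, (hrr _ (E u).2).2 (by simpa using hu), ?_⟩
        rw [eX _ (E u).2]
        refine hYeq _ _ ?_
        rw [hC, ← he]
        simp [x]

theorem exists_digits (B L : ℕ) (f : ℕ → ℕ) (hf : ∀ i, f i < B) :
    ∃ m < B ^ L, ∀ i < L, m / B ^ i % B = f i := by
  induction L generalizing f with
  | zero => exact ⟨0, by simp, by simp⟩
  | succ L ih =>
    obtain ⟨m, hm, h⟩ := ih (fun i => f (i + 1)) (fun i => hf _)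
    have hB : 0 < B := (Nat.zero_le _).trans_lt (hf 0)
    refine ⟨f 0 + B * m, ?_, ?_⟩
    · have h0 := hf 0
      have : B * (m + 1) ≤ B * B ^ L := Nat.mul_le_mul_left _ hm
      rw [pow_succ']
      linarith [mul_add B m 1]
    · intro i hi
      cases i with
      | zero => simp [Nat.mod_eq_of_lt (hf 0)]
      | succ i =>
        rw [pow_succ', ← Nat.div_div_eq_div_mul, Nat.add_mul_div_left _ _ hB,
          Nat.div_eq_of_lt (hf 0), zero_add]
        exact h i (by omega)

/-- The table coded by the base-`(N + 1)` digits of `m`, with rows of length `D + 1`. -/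
def digitTable (N D m w c : ℕ) : ℕ := m / (N + 1) ^ (w * (D + 1) + c) % (N + 1)

/-- The relation on `0, …, K - 1` coded by the binary digits of `ρ`. -/
def digitRel (K ρ w u : ℕ) : Prop := ρ / 2 ^ (w * K + u) % 2 = 1

/-- The numbers `m` and `ρ` code a finite grid-valued model in which the world `w₀` gives value
`1` to all formulas with codes in `L` and not to the formula with code `c₀`. -/
def Refutes (K N D : ℕ) (L : List ℕ) (c₀ m ρ w₀ : ℕ) : Prop :=
  (∀ w < K, ∀ c < D + 1, LocallyCorrect K N (digitTable N D m) (digitRel K ρ) w c) ∧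
  (∀ c ∈ L, digitTable N D m w₀ c = N) ∧ digitTable N D m w₀ c₀ ≠ N

/-- The number of worlds of the countermodels searched for. -/
def worldBound (D : ℕ) : ℕ := (D + 1) * (D + 1) ^ (D + 1)

/-- The common denominator of the values in the countermodels searched for. -/
def valueBound (D : ℕ) : ℕ := gridDen (worldBound D * (D + 1)) 3

/-- The consequence fails exactly if a refuting table exists within explicit bounds. -/
theorem refutes_iff (Γ : List (MFormula ℕ)) (φ : MFormula ℕ) (D : ℕ)
    (hΓ : ∀ γ ∈ Γ, code γ ≤ D) (hφ : code φ ≤ D) :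
    (∃ m < (valueBound D + 1) ^ (worldBound D * (D + 1)),
      ∃ ρ < 2 ^ (worldBound D * worldBound D), ∃ w₀ < worldBound D,
        Refutes (worldBound D) (valueBound D) D (Γ.map code) (code φ) m ρ w₀) ↔
      ¬ ∀ M : LukModel ℕ, ∀ v : M.W, (∀ γ ∈ Γ, M.e v γ = 1) → M.e v φ = 1 := by
  classical
  have hN : 0 < valueBound D := gridDen_pos _ _
  have hNr : (valueBound D : ℝ) ≠ 0 := by exact_mod_cast hN.ne'
  constructor
  · rintro ⟨m, -, ρ, -, w₀, hw₀, hT, hL, hc⟩ hcon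
    obtain ⟨M, v, hM⟩ := exists_model_of_table (D := D) hN
      (fun w c => Nat.lt_succ_iff.1 (Nat.mod_lt _ (Nat.succ_pos _)))
      (fun w hw c hc => hT w hw c (by omega)) hw₀
    have hone : ∀ ψ, code ψ ≤ D →
        (M.e v ψ = 1 ↔ digitTable (valueBound D) D m w₀ (code ψ) = valueBound D) := by
      intro ψ hψ
      rw [hM ψ hψ, div_eq_one_iff_eq hNr, Nat.cast_inj]
      rfl
    exact hc ((hone φ hφ).1 (hcon M v fun γ hγ =>
      (hone γ (hΓ γ hγ)).2 (hL _ (List.mem_map_of_mem hγ))))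
  · intro h
    push Not at h
    obtain ⟨M₀, v₀, hΓ₀, hφ₀⟩ := h
    obtain ⟨M₁, v₁, hatt, h₁⟩ := exists_attained M₀ v₀
    obtain ⟨M, E', v, hv⟩ := exists_finite_model M₁ hatt v₁ D
    have hcard : Fintype.card (TreeWorld D) = worldBound D := by simp [worldBound]
    let E : M.W ≃ Fin (worldBound D) := E'.trans (Fintype.equivFinOfCardEq hcard)
    obtain ⟨Y, r, hYN, hYone, hY⟩ := exists_table_of_model (N := valueBound D) (D := D) rfl M E
    generalize hK : worldBound D = K at *
    generalize valueBound D = N at *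
    obtain ⟨m, hm, hmd⟩ := exists_digits (N + 1) (K * (D + 1))
      (fun i => if h : i / (D + 1) < K then
        Y (⟨i / (D + 1), h⟩, ⟨i % (D + 1), Nat.mod_lt _ (Nat.succ_pos _)⟩) else 0)
      (fun i => by
        split_ifs
        · exact Nat.lt_succ_iff.2 (hYN _)
        · exact Nat.succ_pos _)
    obtain ⟨ρ, hρ, hρd⟩ := exists_digits 2 (K * K)
      (fun i => if h : i / K < K ∧ i % K < K then
        (if r ⟨i / K, h.1⟩ ⟨i % K, h.2⟩ then 1 else 0) else 0)
      (fun i => by split_ifs <;> norm_num)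
    have hT : ∀ (w : Fin K) (c : Fin (D + 1)), digitTable N D m w c = Y (w, c) := by
      intro w c
      have hlt : (w : ℕ) * (D + 1) + c < K * (D + 1) := by
        have := Nat.mul_le_mul_right (D + 1) (Nat.succ_le_of_lt w.2)
        have := c.2
        rw [Nat.succ_mul] at *
        omega
      have hdiv : ((w : ℕ) * (D + 1) + c) / (D + 1) = w := by
        rw [mul_comm, Nat.mul_add_div (Nat.succ_pos _), Nat.div_eq_of_lt c.2, add_zero]
      have hmod : ((w : ℕ) * (D + 1) + c) % (D + 1) = c := by
        rw [mul_comm, Nat.mul_add_mod, Nat.mod_eq_of_lt c.2]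
      rw [digitTable, hmd _ hlt]
      simp only [hdiv, hmod, w.2, dif_pos]
    have hr : ∀ w u : Fin K, digitRel K ρ w u ↔ r w u := by
      intro w u
      have hlt : (w : ℕ) * K + u < K * K := by
        have := Nat.mul_le_mul_right K (Nat.succ_le_of_lt w.2)
        have := u.2
        rw [Nat.succ_mul] at *
        omega
      have hpos : 0 < K := (Nat.zero_le _).trans_lt w.2
      have hdiv : ((w : ℕ) * K + u) / K = w := by
        rw [mul_comm, Nat.mul_add_div hpos, Nat.div_eq_of_lt u.2, add_zero]
      have hmod : ((w : ℕ) * K + u) % K = u := by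
        rw [mul_comm, Nat.mul_add_mod, Nat.mod_eq_of_lt u.2]
      rw [digitRel, hρd _ hlt]
      simp only [hdiv, hmod, w.2, u.2, and_self, dif_pos]
      split_ifs with h <;> simp [h]
    have hone : ∀ ψ, code ψ ≤ D → (M₀.e v₀ ψ = 1 ↔ digitTable N D m (E v) (code ψ) = N) := by
      intro ψ hψ
      rw [← h₁, ← hv ψ hψ, hT (E v) ⟨code ψ, by omega⟩, ← hYone, Equiv.symm_apply_apply]
    refine ⟨m, hm, ρ, hρ, E v, (E v).2, ?_, ?_, ?_⟩
    · exact fun w hw c hc => hY _ _ hT hr w hw c (by omega)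
    · intro c hc
      obtain ⟨γ, hγ, rfl⟩ := List.mem_map.1 hc
      exact (hone γ (hΓ γ hγ)).1 (hΓ₀ γ hγ)
    · exact fun h => hφ₀ ((hone φ hφ).2 h)

/-! ### Primitive recursiveness of the search -/

section Computability

variable {α : Type*} [Primcodable α]

theorem PrimrecPred.imp {p q : α → Prop} (hp : PrimrecPred p) (hq : PrimrecPred q) :
    PrimrecPred fun a => p a → q a :=
  (hp.not.or hq).of_eq fun _ => imp_iff_not_or.symm

theorem PrimrecPred.ball_mem {p : α → ℕ → Prop} {f : α → List ℕ}
    (hp : PrimrecPred fun q : α × ℕ => p q.1 q.2) (hf : Primrec f) :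
    PrimrecPred fun a => ∀ x ∈ f a, p a x :=
  PrimrecRel.comp (PrimrecRel.forall_mem_list (R := fun x a => p a x)
    (hp.comp (Primrec.snd.pair Primrec.fst))) hf Primrec.id

theorem PrimrecPred.ball_lt {p : α → ℕ → Prop} {f : α → ℕ}
    (hp : PrimrecPred fun q : α × ℕ => p q.1 q.2) (hf : Primrec f) :
    PrimrecPred fun a => ∀ x < f a, p a x :=
  (PrimrecPred.ball_mem hp (Primrec.list_range.comp hf)).of_eq (by simp)

theorem PrimrecPred.bex_lt {p : α → ℕ → Prop} {f : α → ℕ}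
    (hp : PrimrecPred fun q : α × ℕ => p q.1 q.2) (hf : Primrec f) :
    PrimrecPred fun a => ∃ x < f a, p a x :=
  (PrimrecPred.not (PrimrecPred.ball_lt (p := fun a x => ¬ p a x) hp.not hf)).of_eq
    fun a => by push Not; rfl

theorem primrec_pow {f g : α → ℕ} (hf : Primrec f) (hg : Primrec g) :
    Primrec fun a => f a ^ g a := by
  refine (Primrec.nat_rec' (h := fun a q => q.2 * f a) hg (Primrec.const 1)
    (Primrec.nat_mul.comp (Primrec.snd.comp Primrec.snd) (hf.comp Primrec.fst))).of_eq ?_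
  intro a
  induction g a with
  | zero => rfl
  | succ n ih => rw [pow_succ, ← ih]

theorem primrec_factorial : Primrec Nat.factorial := by
  refine (Primrec.nat_rec' (h := fun _ q => (q.1 + 1) * q.2) Primrec.id (Primrec.const 1)
    (Primrec.nat_mul.comp (Primrec.succ.comp (Primrec.fst.comp Primrec.snd))
      (Primrec.snd.comp Primrec.snd))).of_eq ?_
  intro n
  induction n with
  | zero => rfl
  | succ n ih => rw [Nat.factorial_succ, ← ih]; rfl

/-- One step of the recursion for `gridDen`, turned into an iteration of a fixed
function: the pair holds the bound on coefficients and the product accumulated so far. -/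
def gridDenStep (p : ℕ × ℕ) : ℕ × ℕ := (2 * p.1 * p.1, p.2 * (2 * p.1.factorial))

theorem gridDenStep_iterate (m : ℕ) (p : ℕ × ℕ) :
    (gridDenStep^[m] p).2 = p.2 * gridDen m p.1 := by
  induction m generalizing p with
  | zero => simp [gridDen]
  | succ m ih =>
    rw [Function.iterate_succ_apply, ih, gridDen, gridDenStep]
    simp only [mul_assoc]

theorem primrec_gridDen {f g : α → ℕ} (hf : Primrec f) (hg : Primrec g) :
    Primrec fun a => gridDen (f a) (g a) := by
  have hstep : Primrec gridDenStep :=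
    (Primrec.nat_mul.comp (Primrec.nat_mul.comp (Primrec.const 2) Primrec.fst) Primrec.fst).pair
      (Primrec.nat_mul.comp Primrec.snd
        (Primrec.nat_mul.comp (Primrec.const 2) (primrec_factorial.comp Primrec.fst)))
  refine (Primrec.snd.comp (Primrec.nat_iterate hf (hg.pair (Primrec.const 1))
    (hstep.comp₂ Primrec₂.right))).of_eq fun a => ?_
  rw [gridDenStep_iterate, one_mul]

theorem primrec_worldBound {f : α → ℕ} (hf : Primrec f) : Primrec fun a => worldBound (f a) :=
  Primrec.nat_mul.comp (Primrec.succ.comp hf)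
    (primrec_pow (Primrec.succ.comp hf) (Primrec.succ.comp hf))

theorem primrec_valueBound {f : α → ℕ} (hf : Primrec f) : Primrec fun a => valueBound (f a) :=
  primrec_gridDen (Primrec.nat_mul.comp (primrec_worldBound hf) (Primrec.succ.comp hf))
    (Primrec.const 3)

theorem primrec_digitTable {N D m w c : α → ℕ} (hN : Primrec N) (hD : Primrec D)
    (hm : Primrec m) (hw : Primrec w) (hc : Primrec c) :
    Primrec fun a => digitTable (N a) (D a) (m a) (w a) (c a) :=
  Primrec.nat_mod.comp (Primrec.nat_div.comp hm (primrec_pow (Primrec.succ.comp hN)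
    (Primrec.nat_add.comp (Primrec.nat_mul.comp hw (Primrec.succ.comp hD)) hc)))
    (Primrec.succ.comp hN)

theorem primrecPred_digitRel {K ρ w u : α → ℕ} (hK : Primrec K) (hρ : Primrec ρ)
    (hw : Primrec w) (hu : Primrec u) :
    PrimrecPred fun a => digitRel (K a) (ρ a) (w a) (u a) :=
  Primrec.eq.comp (Primrec.nat_mod.comp (Primrec.nat_div.comp hρ (primrec_pow (Primrec.const 2)
    (Primrec.nat_add.comp (Primrec.nat_mul.comp hw hK) hu))) (Primrec.const 2)) (Primrec.const 1)

theorem primrecPred_locallyCorrect {K N D m ρ w c : α → ℕ} (hK : Primrec K) (hN : Primrec N)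
    (hD : Primrec D) (hm : Primrec m) (hρ : Primrec ρ) (hw : Primrec w) (hc : Primrec c) :
    PrimrecPred fun a => LocallyCorrect (K a) (N a) (digitTable (N a) (D a) (m a))
      (digitRel (K a) (ρ a)) (w a) (c a) := by
  have tag : ∀ i : ℕ, PrimrecPred fun a => (c a).unpair.1 = i := fun i =>
    Primrec.eq.comp (Primrec.fst.comp (Primrec.unpair.comp hc)) (Primrec.const i)
  have hx : Primrec fun a => (c a).unpair.2 := Primrec.snd.comp (Primrec.unpair.comp hc)
  have hl : Primrec fun a => (c a).unpair.2.unpair.1 :=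
    Primrec.fst.comp (Primrec.unpair.comp hx)
  have hr : Primrec fun a => (c a).unpair.2.unpair.2 :=
    Primrec.snd.comp (Primrec.unpair.comp hx)
  have tC := primrec_digitTable hN hD hm hw hc
  have tL := primrec_digitTable hN hD hm hw hl
  have tR := primrec_digitTable hN hD hm hw hr
  have up : ∀ {g : α → ℕ}, Primrec g → Primrec fun q : α × ℕ => g q.1 :=
    fun hg => hg.comp Primrec.fst
  have tX : Primrec fun q : α × ℕ => digitTable (N q.1) (D q.1) (m q.1) q.2 (c q.1).unpair.2 :=
    primrec_digitTable (up hN) (up hD) (up hm) Primrec.snd (up hx)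
  have rel : PrimrecPred fun q : α × ℕ => digitRel (K q.1) (ρ q.1) (w q.1) q.2 :=
    primrecPred_digitRel (up hK) (up hρ) (up hw) Primrec.snd
  refine ((tag 1).imp (Primrec.eq.comp tC (Primrec.const 0))).and <|
    ((tag 2).imp (Primrec.eq.comp tC hN)).and <|
    ((tag 3).imp (Primrec.eq.comp tC (Primrec.nat_min.comp tL tR))).and <|
    ((tag 4).imp (Primrec.eq.comp tC (Primrec.nat_max.comp tL tR))).and <|
    ((tag 5).imp (Primrec.eq.comp tC
      (Primrec.nat_sub.comp (Primrec.nat_add.comp tL tR) hN))).and <|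
    ((tag 6).imp (Primrec.eq.comp tC
      (Primrec.nat_min.comp hN (Primrec.nat_add.comp (Primrec.nat_sub.comp hN tL) tR)))).and <|
    ((tag 7).imp (PrimrecPred.and ?_ (PrimrecPred.or (Primrec.eq.comp tC hN) ?_))).and <|
    (tag 8).imp (PrimrecPred.and ?_ (PrimrecPred.or (Primrec.eq.comp tC (Primrec.const 0)) ?_))
  · exact PrimrecPred.ball_lt (rel.imp (Primrec.nat_le.comp (up tC) tX)) hK
  · exact PrimrecPred.bex_lt (rel.and (Primrec.eq.comp tX (up tC))) hK
  · exact PrimrecPred.ball_lt (rel.imp (Primrec.nat_le.comp tX (up tC))) hK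
  · exact PrimrecPred.bex_lt (rel.and (Primrec.eq.comp tX (up tC))) hK

theorem primrecPred_refutes {K N D c₀ m ρ w₀ : α → ℕ} {L : α → List ℕ} (hK : Primrec K)
    (hN : Primrec N) (hD : Primrec D) (hL : Primrec L) (hc₀ : Primrec c₀) (hm : Primrec m)
    (hρ : Primrec ρ) (hw₀ : Primrec w₀) :
    PrimrecPred fun a => Refutes (K a) (N a) (D a) (L a) (c₀ a) (m a) (ρ a) (w₀ a) := by
  have up : ∀ {g : α → ℕ}, Primrec g → Primrec fun q : α × ℕ => g q.1 :=
    fun hg => hg.comp Primrec.fst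
  have up2 : ∀ {g : α → ℕ}, Primrec g → Primrec fun q : (α × ℕ) × ℕ => g q.1.1 :=
    fun hg => hg.comp (Primrec.fst.comp Primrec.fst)
  refine PrimrecPred.and (PrimrecPred.ball_lt (PrimrecPred.ball_lt ?_ ?_) hK)
    ((PrimrecPred.ball_mem ?_ hL).and (PrimrecPred.not ?_))
  · exact primrecPred_locallyCorrect (up2 hK) (up2 hN) (up2 hD) (up2 hm) (up2 hρ)
      (Primrec.snd.comp Primrec.fst) Primrec.snd
  · exact Primrec.succ.comp (up hD)
  · exact Primrec.eq.comp
      (primrec_digitTable (up hN) (up hD) (up hm) (up hw₀) Primrec.snd) (up hN)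
  · exact Primrec.eq.comp (primrec_digitTable hN hD hm hw₀ hc₀) hN

end Computability

/-- A refuting table exists for the instance with code `n`. The number `n` itself serves as the
bound on the codes of the formulas involved. -/
def SearchSucceeds (n : ℕ) : Prop :=
  ∃ m < (valueBound n + 1) ^ (worldBound n * (n + 1)),
    ∃ ρ < 2 ^ (worldBound n * worldBound n), ∃ w₀ < worldBound n,
      Refutes (worldBound n) (valueBound n) n (Denumerable.ofNat (List ℕ) n.unpair.1) n.unpair.2
        m ρ w₀

theorem primrecPred_searchSucceeds : PrimrecPred SearchSucceeds := by
  have hW := primrec_worldBound Primrec.id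
  have hV := primrec_valueBound Primrec.id
  have hn : Primrec fun q : ((ℕ × ℕ) × ℕ) × ℕ => q.1.1.1 :=
    Primrec.fst.comp (Primrec.fst.comp Primrec.fst)
  refine PrimrecPred.bex_lt (PrimrecPred.bex_lt (PrimrecPred.bex_lt
    (primrecPred_refutes (hW.comp hn) (hV.comp hn) hn
      ((Primrec.ofNat (List ℕ)).comp (Primrec.fst.comp (Primrec.unpair.comp hn)))
      (Primrec.snd.comp (Primrec.unpair.comp hn))
      (Primrec.snd.comp (Primrec.fst.comp Primrec.fst)) (Primrec.snd.comp Primrec.fst)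
      Primrec.snd) ?_) ?_) ?_
  · exact hW.comp (Primrec.fst.comp Primrec.fst)
  · exact primrec_pow (Primrec.const 2)
      (Primrec.nat_mul.comp (hW.comp Primrec.fst) (hW.comp Primrec.fst))
  · exact primrec_pow (Primrec.succ.comp hV)
      (Primrec.nat_mul.comp hW (Primrec.succ.comp Primrec.id))

theorem le_encode_of_mem {l : List ℕ} {a : ℕ} (h : a ∈ l) : a ≤ Encodable.encode l := by
  induction l with
  | nil => simp at h
  | cons b l ih =>
    rw [Encodable.encode_list_cons]
    have h1 := Nat.left_le_pair b (Encodable.encode l)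
    have h2 := Nat.right_le_pair b (Encodable.encode l)
    rcases List.mem_cons.1 h with rfl | h
    · exact h1.trans (Nat.le_succ _)
    · exact ((ih h).trans h2).trans (Nat.le_succ _)

theorem searchSucceeds_codePair (Γ : List (MFormula ℕ)) (φ : MFormula ℕ) :
    SearchSucceeds (codePair Γ φ) ↔
      ¬ ∀ M : LukModel ℕ, ∀ v : M.W, (∀ γ ∈ Γ, M.e v γ = 1) → M.e v φ = 1 := by
  rw [← refutes_iff Γ φ (codePair Γ φ)
    (fun γ hγ => (le_encode_of_mem (List.mem_map_of_mem hγ)).trans (Nat.left_le_pair _ _))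
    (Nat.right_le_pair _ _)]
  have h1 : Denumerable.ofNat (List ℕ) (codePair Γ φ).unpair.1 = Γ.map code := by
    rw [codePair, Nat.unpair_pair, Denumerable.ofNat_encode]
  have h2 : (codePair Γ φ).unpair.2 = code φ := by rw [codePair, Nat.unpair_pair]
  rw [SearchSucceeds, h1, h2]

/-- **Theorem.** The finitary local consequence relation of Łukasiewicz modal logic (over
all safe Łukasiewicz Kripke models) is decidable: some computable function decides it on the
codes of its instances. -/
theorem luk_local_consequence_decidable :
    ∃ f : ℕ → Bool, Computable f ∧
      ∀ (Γ : List (MFormula ℕ)) (φ : MFormula ℕ),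
        (f (codePair Γ φ) = true ↔
          ∀ M : LukModel ℕ, ∀ v : M.W, (∀ γ ∈ Γ, M.e v γ = 1) → M.e v φ = 1) := by
  classical
  refine ⟨fun n => decide (¬ SearchSucceeds n), primrecPred_searchSucceeds.not.decide.to_comp,
    fun Γ φ => ?_⟩
  rw [decide_eq_true_iff, searchSucceeds_codePair, not_not]
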